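/- Let (X,d) be a totally bounded UT-space. Then every open ball of (X,d) is a centered sphere in (X,d). -/

import Mathlib

open scoped Classical ENNReal

universe u

/-- The ultrametric `d_l` generated by a labeling `l` on the vertex set of a tree `G`:
for `u ≠ v` it is the maximum of `l` over the vertices of the unique path joining
`u` and `v`, and `d_l(u,u) = 0`. -/
noncomputable def dl {V : Type*} {G : SimpleGraph V} (hG : G.IsTree) (l : V → ℝ)
    (u v : V) : ℝ :=
  if u = v then 0
  else (((hG.existsUnique_path u v).exists.choose.support).map l).foldr max (l u)

/-- `(X,d)` is a **UT-space**: it is isometric to `(V(T), d_l)` for some labeled tree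
`(T,l)` with a non-degenerate labeling `l : V(T) → [0,∞)`. -/
def IsUTSpace (X : Type u) [MetricSpace X] : Prop :=
  ∃ (V : Type u) (G : SimpleGraph V) (hG : G.IsTree) (l : V → ℝ),
    (∀ v, 0 ≤ l v) ∧
    (∀ u v : V, G.Adj u v → 0 < max (l u) (l v)) ∧
    ∃ Φ : X → V, Function.Bijective Φ ∧ ∀ x y : X, dist x y = dl hG l (Φ x) (Φ y)

/-- The distance set `D(X) = {d(x,y) : x,y ∈ X}`, with distances recorded as
extended non-negative reals. -/
def distSet (X : Type*) [MetricSpace X] : Set ℝ≥0∞ :=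
  {t | ∃ x y : X, edist x y = t}

/-- The center of distances `C(X) = {t ∈ D(X) : ∀ p ∈ X, ∃ x ∈ X, d(p,x) = t}`. -/
def centerOfDistances (X : Type*) [MetricSpace X] : Set ℝ≥0∞ :=
  {t | t ∈ distSet X ∧ ∀ p : X, ∃ x : X, edist p x = t}

/-- A subset `S` of a metric space is a **centered sphere** if there are `c ∈ S` and
`r ∈ [0,∞)` with `S = {x : d(x,c) = r} ∪ {c}`. -/
def IsCenteredSphere {X : Type*} [MetricSpace X] (S : Set X) : Prop :=
  ∃ c ∈ S, ∃ r : ℝ, 0 ≤ r ∧ S = {x : X | dist x c = r} ∪ {c}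

/-!
In a UT-space the distance between two points is the largest label on the path joining them. Hence
the space is ultrametric, every distance `d(x,y)` is the label of a point at distance at most
`d(x,y)` from `x`, and distinct points lie at distance at least the label of either of them.

By the last property the points of a totally bounded ball with label at least `s > 0` form a
separated set, hence a finite one, so some point `p` of the ball has the largest label `l p`. Every
other point of the ball is at distance exactly `l p` from `p`: at least `l p` by the last property
again, and at most `l p` because that distance is itself the label of a point of the ball.
-/

open Metric

theorem isGreatest_foldr_max {α : Type*} [LinearOrder α] (L : List α) (a : α) :
    IsGreatest {x | x ∈ a :: L} (L.foldr max a) := by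
  induction L with
  | nil => simp
  | cons b L ih =>
    have hinsert : {x | x ∈ a :: b :: L} = insert b {x | x ∈ a :: L} := by
      ext x
      simp [or_left_comm]
    exact hinsert ▸ ih.insert b

section Tree

variable {V : Type*} {G : SimpleGraph V} {hG : G.IsTree} {l : V → ℝ} {u v w : V}

@[simp]
theorem dl_self : dl hG l u u = 0 := if_pos rfl

theorem isGreatest_dl {p : G.Walk u v} (hp : p.IsPath) (huv : u ≠ v) :
    IsGreatest (l '' {w | w ∈ p.support}) (dl hG l u v) := by
  have himage : l '' {w | w ∈ p.support} = {x | x ∈ l u :: p.support.map l} := by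
    have hu : l u ∈ p.support.map l := List.mem_map_of_mem p.start_mem_support
    ext x
    simpa using fun hx : x = l u ↦ List.mem_map.1 (hx ▸ hu)
  have hunique : (hG.existsUnique_path u v).exists.choose = p :=
    (hG.existsUnique_path u v).unique (hG.existsUnique_path u v).exists.choose_spec hp
  rw [dl, if_neg huv, hunique, himage]
  exact isGreatest_foldr_max _ _

theorem label_le_dl (huv : u ≠ v) : l u ≤ dl hG l u v := by
  obtain ⟨p, hp⟩ := hG.connected.exists_isPath u v
  exact (isGreatest_dl hp huv).2 ⟨u, p.start_mem_support, rfl⟩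

theorem dl_le_of_walk (hl : ∀ v, 0 ≤ l v) (q : G.Walk u v) {M : ℝ}
    (hM : ∀ w ∈ q.support, l w ≤ M) : dl hG l u v ≤ M := by
  rcases eq_or_ne u v with rfl | huv
  · exact dl_self.trans_le ((hl u).trans (hM u q.start_mem_support))
  · obtain ⟨w, hw, hlw⟩ := (isGreatest_dl (hG := hG) (l := l) q.bypass_isPath huv).1
    exact hlw ▸ hM w (q.support_bypass_subset_support hw)

theorem exists_label_eq_dl (hl : ∀ v, 0 ≤ l v) (huv : u ≠ v) :
    ∃ w, l w = dl hG l u v ∧ dl hG l u w ≤ dl hG l u v := by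
  obtain ⟨p, hp⟩ := hG.connected.exists_isPath u v
  have hgreatest := isGreatest_dl (hG := hG) (l := l) hp huv
  obtain ⟨w, hw, hlw⟩ := hgreatest.1
  refine ⟨w, hlw, dl_le_of_walk hl (p.takeUntil w hw) fun z hz ↦ hgreatest.2 ⟨z, ?_, rfl⟩⟩
  exact p.support_takeUntil_subset_support hw hz

theorem dl_triangle_max (hl : ∀ v, 0 ≤ l v) : dl hG l u w ≤ max (dl hG l u v) (dl hG l v w) := by
  rcases eq_or_ne u v with rfl | huv
  · exact le_max_right _ _
  rcases eq_or_ne v w with rfl | hvw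
  · exact le_max_left _ _
  obtain ⟨p, hp⟩ := hG.connected.exists_isPath u v
  obtain ⟨q, hq⟩ := hG.connected.exists_isPath v w
  refine dl_le_of_walk hl (p.append q) fun z hz ↦ ?_
  rcases SimpleGraph.Walk.mem_support_append_iff .. |>.1 hz with hzp | hzq
  · exact le_max_of_le_left ((isGreatest_dl hp huv).2 ⟨z, hzp, rfl⟩)
  · exact le_max_of_le_right ((isGreatest_dl hq hvw).2 ⟨z, hzq, rfl⟩)

end Tree

/-- A real function on a space that behaves metrically like the vertex labeling of a labeled tree
`(T, l)` with distance `d_l`. The second field stands for the path from `x` to `y`: `z` is a vertex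
of largest label on it. -/
structure IsDistLabeling {X : Type*} [Dist X] (l : X → ℝ) : Prop where
  le_dist {x y : X} : x ≠ y → l x ≤ dist x y
  exists_eq_dist {x y : X} : x ≠ y → ∃ z, l z = dist x y ∧ dist x z ≤ dist x y

namespace IsUTSpace

variable {X : Type u} [MetricSpace X]

theorem isUltrametricDist (hX : IsUTSpace X) : IsUltrametricDist X := by
  obtain ⟨V, G, hG, l, hl, -, Φ, -, hdist⟩ := hX
  refine ⟨fun x y z ↦ ?_⟩
  simpa only [hdist] using dl_triangle_max hl

theorem exists_isDistLabeling (hX : IsUTSpace X) : ∃ l : X → ℝ, IsDistLabeling l := by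
  obtain ⟨V, G, hG, l, hl, -, Φ, hΦ, hdist⟩ := hX
  refine ⟨l ∘ Φ, fun {x y} hxy ↦ ?_, fun {x y} hxy ↦ ?_⟩
  · exact (label_le_dl (hΦ.injective.ne hxy)).trans_eq (hdist x y).symm
  · simpa only [hdist, Function.comp_apply, hΦ.surjective.exists] using
      exists_label_eq_dl hl (hΦ.injective.ne hxy)

end IsUTSpace

theorem finite_of_isSeparated_of_totallyBounded {X : Type*} [PseudoEMetricSpace X] {ε : NNReal}
    {S : Set X} (hε : ε ≠ 0) (hsep : IsSeparated ε S) (hS : TotallyBounded S) : S.Finite := by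
  obtain ⟨N, -, hN, hcover⟩ := exists_finite_isCover_of_totallyBounded (half_pos hε.bot_lt).ne' hS
  rw [← mul_div_cancel₀ ε two_ne_zero] at hsep
  rw [← Set.encard_lt_top_iff]
  calc
    S.encard ≤ packingNumber (2 * (ε / 2)) S := hsep.encard_le_packingNumber subset_rfl
    _ ≤ externalCoveringNumber (ε / 2) S := packingNumber_two_mul_le_externalCoveringNumber _ _
    _ ≤ N.encard := hcover.externalCoveringNumber_le_encard
    _ < ⊤ := hN.encard_lt_top

namespace IsDistLabeling

section PseudoMetric

variable {X : Type*} [PseudoMetricSpace X] {l : X → ℝ} {S : Set X} {c p x y : X} {r s : ℝ}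

theorem finite_setOf_le (hl : IsDistLabeling l) (hS : TotallyBounded S) (hs : 0 < s) :
    {x ∈ S | s ≤ l x}.Finite := by
  have hsep : IsSeparated (s / 2).toNNReal {x ∈ S | s ≤ l x} := fun x hx y _ hxy ↦ by
    have hdist : s ≤ dist x y := hx.2.trans (hl.le_dist hxy)
    change ENNReal.ofReal (s / 2) < edist x y
    rw [edist_dist]
    exact (ENNReal.ofReal_lt_ofReal_iff (by linarith)).2 (by linarith)
  exact finite_of_isSeparated_of_totallyBounded (Real.toNNReal_pos.2 (half_pos hs)).ne' hsep
    (hS.subset (Set.sep_subset _ _))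

theorem exists_isMaxOn (hl : IsDistLabeling l) (hS : TotallyBounded S) (hpos : ∃ x ∈ S, 0 < l x) :
    ∃ p ∈ S, IsMaxOn l S p := by
  obtain ⟨x, hx, hlx⟩ := hpos
  obtain ⟨p, ⟨hp, hxp⟩, hmax⟩ :=
    Set.exists_max_image _ l (hl.finite_setOf_le hS hlx) ⟨x, hx, le_rfl⟩
  refine ⟨p, hp, fun y hy ↦ ?_⟩
  rcases le_total (l x) (l y) with hxy | hyx
  · exact hmax y ⟨hy, hxy⟩
  · exact hyx.trans hxp

variable [IsUltrametricDist X]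

theorem exists_mem_ball_eq_dist (hl : IsDistLabeling l) (hx : x ∈ ball c r) (hy : y ∈ ball c r)
    (hxy : x ≠ y) : ∃ z ∈ ball c r, l z = dist x y := by
  obtain ⟨z, hz, hxz⟩ := hl.exists_eq_dist hxy
  rw [IsUltrametricDist.ball_eq_of_mem hx] at hy ⊢
  exact ⟨z, mem_ball'.2 (hxz.trans_lt (mem_ball'.1 hy)), hz⟩

theorem dist_eq_of_isMaxOn_ball (hl : IsDistLabeling l) (hp : p ∈ ball c r)
    (hmax : IsMaxOn l (ball c r) p) (hx : x ∈ ball c r) (hxp : x ≠ p) : dist x p = l p := by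
  obtain ⟨z, hz, hlz⟩ := hl.exists_mem_ball_eq_dist hx hp hxp
  refine le_antisymm (hlz ▸ hmax hz) ?_
  rw [dist_comm]
  exact hl.le_dist hxp.symm

end PseudoMetric

variable {X : Type*} [MetricSpace X] [IsUltrametricDist X] {l : X → ℝ} {c p : X} {r : ℝ}

theorem isCenteredSphere_ball_of_isMaxOn (hl : IsDistLabeling l) (hball : (ball c r).Nontrivial)
    (hp : p ∈ ball c r) (hmax : IsMaxOn l (ball c r) p) : IsCenteredSphere (ball c r) := by
  obtain ⟨y, hy, hyp⟩ := hball.exists_ne p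
  have hlp : dist y p = l p := hl.dist_eq_of_isMaxOn_ball hp hmax hy hyp
  refine ⟨p, hp, l p, hlp ▸ dist_nonneg, Set.Subset.antisymm (fun x hx ↦ ?_) ?_⟩
  · exact (eq_or_ne x p).symm.imp_left (hl.dist_eq_of_isMaxOn_ball hp hmax hx)
  · rintro x (hx | rfl)
    · rw [IsUltrametricDist.ball_eq_of_mem hp] at hy ⊢
      exact (hx.trans hlp.symm).trans_lt hy
    · exact hp

end IsDistLabeling

theorem isCenteredSphere_singleton {X : Type*} [MetricSpace X] (c : X) :
    IsCenteredSphere ({c} : Set X) :=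
  ⟨c, rfl, 0, le_rfl, by simp⟩

theorem ball_isCenteredSphere_of_totallyBounded_UT_general {X : Type u} [MetricSpace X]
    (hX : IsUTSpace X) {c : X} {r : ℝ} (hr : 0 < r) (htb : TotallyBounded (ball c r)) :
    IsCenteredSphere (ball c r) := by
  have := hX.isUltrametricDist
  obtain ⟨l, hl⟩ := hX.exists_isDistLabeling
  rcases (ball c r).subsingleton_or_nontrivial with hball | hball
  · rw [hball.eq_singleton_of_mem (mem_ball_self hr)]
    exact isCenteredSphere_singleton c
  · have ⟨x, hx, y, hy, hxy⟩ := hball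
    obtain ⟨z, hz, hlz⟩ := hl.exists_mem_ball_eq_dist hx hy hxy
    obtain ⟨p, hp, hmax⟩ := hl.exists_isMaxOn htb ⟨z, hz, hlz ▸ dist_pos.2 hxy⟩
    exact hl.isCenteredSphere_ball_of_isMaxOn hball hp hmax

/-- Let `(X,d)` be a totally bounded UT-space.  Then every open
ball of `(X,d)` is a centered sphere in `(X,d)`. -/
theorem ball_isCenteredSphere_of_totallyBounded_UT
    {X : Type u} [MetricSpace X] (hX : IsUTSpace X)
    (htb : TotallyBounded (Set.univ : Set X)) :
    ∀ (c : X) (r : ℝ), 0 < r → IsCenteredSphere (Metric.ball c r) :=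
  fun _ _ hr ↦
    ball_isCenteredSphere_of_totallyBounded_UT_general hX hr (htb.subset (Set.subset_univ _))
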